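/- (Intrinsic characterisation of the lower and upper measures.) Let λ be a probability measure on the set of simplicial complexes Y ⊆ ∂Δ_n (a nonnegative function on complexes summing to 1), and let p_σ ∈ [0,1] (σ ∈ ∂Δ_n) be fixed, q_σ = 1 − p_σ. Then: (1) λ = P̲_n if and only if for every simplicial complex K ⊆ ∂Δ_n one has Σ_{Y ⊇ K} λ(Y) = ∏_{σ∈K} p_σ; (2) λ = P̄_n if and only if for every simplicial complex K ⊆ ∂Δ_n one has Σ_{Y ⊆ K} λ(Y) = ∏_{σ∈∂Δ_n, σ∉K} q_σ. -/

import Mathlib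

open Finset

/-- The full simplex `Δₙ`: all nonempty subsets of `[n] = {0,…,n}`. -/
def simplexAll (n : ℕ) : Finset (Finset (Fin (n+1))) :=
  Finset.univ.filter fun σ => σ.Nonempty

/-- The boundary `∂Δₙ`: all nonempty proper subsets of `[n]`. -/
def bdry (n : ℕ) : Finset (Finset (Fin (n+1))) :=
  Finset.univ.filter fun σ => σ.Nonempty ∧ σ ≠ Finset.univ

/-- A hypergraph is a simplicial complex if it is closed under passing to
nonempty subsets. -/
def IsComplex {n : ℕ} (X : Finset (Finset (Fin (n+1)))) : Prop :=
  ∀ σ ∈ X, ∀ τ : Finset (Fin (n+1)), τ ⊆ σ → τ.Nonempty → τ ∈ X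

instance {n : ℕ} (X : Finset (Finset (Fin (n+1)))) : Decidable (IsComplex X) :=
  inferInstanceAs (Decidable (∀ σ ∈ X, ∀ τ : Finset (Fin (n+1)), τ ⊆ σ → τ.Nonempty → τ ∈ X))

/-- The dual hypergraph `c(X) = {σ̂ : σ ∈ ∂Δₙ, σ ∉ X}`, where `σ̂ = [n] \ σ`. -/
def dual {n : ℕ} (X : Finset (Finset (Fin (n+1)))) : Finset (Finset (Fin (n+1))) :=
  (bdry n \ X).image fun σ => σᶜ

/-- `X̄`: the smallest simplicial complex containing the hypergraph `X`. -/
def clUp {n : ℕ} (X : Finset (Finset (Fin (n+1)))) : Finset (Finset (Fin (n+1))) :=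
  Finset.univ.filter fun τ => τ.Nonempty ∧ ∃ σ ∈ X, τ ⊆ σ

/-- `X̲`: the largest simplicial complex contained in the hypergraph `X`. -/
def clLow {n : ℕ} (X : Finset (Finset (Fin (n+1)))) : Finset (Finset (Fin (n+1))) :=
  Finset.univ.filter fun τ => τ.Nonempty ∧ ∀ σ : Finset (Fin (n+1)), σ ⊆ τ → σ.Nonempty → σ ∈ X

/-- The Bernoulli measure with parameters `p` on hypergraphs contained in the
ambient set `S` of simplices: `P(X) = ∏_{σ∈X} p σ · ∏_{σ∈S\X} (1 - p σ)`. -/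
def bern {n : ℕ} (S : Finset (Finset (Fin (n+1)))) (p : Finset (Fin (n+1)) → ℝ)
    (X : Finset (Finset (Fin (n+1)))) : ℝ :=
  (∏ σ ∈ X, p σ) * ∏ σ ∈ S \ X, (1 - p σ)

/-- The upper measure: `P̄(Y) = Σ_{X ⊆ S, X̄ = Y} P(X)`. -/
def upperP {n : ℕ} (S : Finset (Finset (Fin (n+1)))) (p : Finset (Fin (n+1)) → ℝ)
    (Y : Finset (Finset (Fin (n+1)))) : ℝ :=
  ∑ X ∈ S.powerset.filter (fun X => clUp X = Y), bern S p X

/-- The lower measure: `P̲(Y) = Σ_{X ⊆ S, X̲ = Y} P(X)`. -/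
def lowerP {n : ℕ} (S : Finset (Finset (Fin (n+1)))) (p : Finset (Fin (n+1)) → ℝ)
    (Y : Finset (Finset (Fin (n+1)))) : ℝ :=
  ∑ X ∈ S.powerset.filter (fun X => clLow X = Y), bern S p X

/-- External simplices of `Y` relative to the ambient set `S`: simplices
`σ ∈ S` with `σ ∉ Y` but every nonempty proper subset of `σ` in `Y`. -/
def extSimp {n : ℕ} (S Y : Finset (Finset (Fin (n+1)))) : Finset (Finset (Fin (n+1))) :=
  S.filter fun σ => σ ∉ Y ∧ ∀ τ : Finset (Fin (n+1)), τ ⊂ σ → τ.Nonempty → τ ∈ Y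

/-- Maximal simplices of `Y`: simplices of `Y` not properly contained in another
simplex of `Y`. -/
def maxSimp {n : ℕ} (Y : Finset (Finset (Fin (n+1)))) : Finset (Finset (Fin (n+1))) :=
  Y.filter fun σ => ∀ τ ∈ Y, σ ⊆ τ → σ = τ

lemma aux_unique {α : Type*} [DecidableEq α] (T : Finset α) (r : α → α → Prop) [DecidableRel r]
    (m : α → ℕ) (hr : ∀ a, r a a) (hm : ∀ K ∈ T, ∀ Y ∈ T, r K Y → Y ≠ K → m Y < m K)
    (f g : α → ℝ)
    (h : ∀ K ∈ T, ∑ Y ∈ T.filter (fun Y => r K Y), f Y = ∑ Y ∈ T.filter (fun Y => r K Y), g Y) :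
    ∀ K ∈ T, f K = g K := by
  have key : ∀ N : ℕ, ∀ K ∈ T, m K = N → f K = g K := by
    intro N
    induction N using Nat.strong_induction_on with
    | _ N ih =>
      intro K hK hN
      have hmem : K ∈ T.filter (fun Y => r K Y) := by simp [hK, hr]
      have h1 := h K hK
      rw [← Finset.add_sum_erase _ _ hmem, ← Finset.add_sum_erase _ _ hmem] at h1
      have h2 : ∑ Y ∈ (T.filter (fun Y => r K Y)).erase K, f Y
          = ∑ Y ∈ (T.filter (fun Y => r K Y)).erase K, g Y := by
        apply Finset.sum_congr rfl
        intro Y hY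
        simp only [Finset.mem_erase, Finset.mem_filter] at hY
        exact ih (m Y) (hN ▸ hm K hK Y hY.2.1 hY.2.2 hY.1) Y hY.2.1 rfl
      linarith
  intro K hK
  exact key _ K hK rfl

lemma bern_sup {n : ℕ} (S K : Finset (Finset (Fin (n+1)))) (p : Finset (Fin (n+1)) → ℝ)
    (hK : K ⊆ S) :
    ∑ X ∈ S.powerset.filter (fun X => K ⊆ X), bern S p X = ∏ σ ∈ K, p σ := by
  have h := Finset.prod_add (fun σ => p σ) (fun σ => if σ ∈ K then 0 else 1 - p σ) S
  have h1 : ∏ σ ∈ S, (p σ + if σ ∈ K then 0 else 1 - p σ) = ∏ σ ∈ K, p σ := by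
    rw [← Finset.prod_subset hK]
    · apply Finset.prod_congr rfl
      intro σ hσ
      simp [hσ]
    · intro σ _ hσ
      simp [hσ]
  rw [← h1, h, Finset.sum_filter]
  apply Finset.sum_congr rfl
  intro X hX
  split_ifs with hKX
  · unfold bern
    congr 1
    apply Finset.prod_congr rfl
    intro σ hσ
    have : σ ∉ K := fun hk => (Finset.mem_sdiff.1 hσ).2 (hKX hk)
    simp [this]
  · obtain ⟨σ, hσ, hσX⟩ := Finset.not_subset.1 hKX
    symm
    apply mul_eq_zero_of_right
    exact Finset.prod_eq_zero (Finset.mem_sdiff.2 ⟨hK hσ, hσX⟩) (by simp [hσ])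

lemma bern_sub {n : ℕ} (S K : Finset (Finset (Fin (n+1)))) (p : Finset (Fin (n+1)) → ℝ) :
    ∑ X ∈ S.powerset.filter (fun X => X ⊆ K), bern S p X = ∏ σ ∈ S \ K, (1 - p σ) := by
  have h := Finset.prod_add (fun σ => if σ ∈ K then p σ else 0) (fun σ => 1 - p σ) S
  have h1 : ∏ σ ∈ S, ((if σ ∈ K then p σ else 0) + (1 - p σ)) = ∏ σ ∈ S \ K, (1 - p σ) := by
    rw [← Finset.prod_subset (Finset.sdiff_subset (s := S) (t := K))]
    · apply Finset.prod_congr rfl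
      intro σ hσ
      simp [(Finset.mem_sdiff.1 hσ).2]
    · intro σ hσS hσ
      have : σ ∈ K := by
        by_contra hk
        exact hσ (Finset.mem_sdiff.2 ⟨hσS, hk⟩)
      simp [this]
  rw [← h1, h, Finset.sum_filter]
  apply Finset.sum_congr rfl
  intro X hX
  split_ifs with hKX
  · unfold bern
    congr 1
    apply Finset.prod_congr rfl
    intro σ hσ
    simp [hKX hσ]
  · obtain ⟨σ, hσ, hσX⟩ := Finset.not_subset.1 hKX
    symm
    apply mul_eq_zero_of_left
    exact Finset.prod_eq_zero hσ (by simp [hσX])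

lemma bdry_nonempty_of_mem {n : ℕ} {σ : Finset (Fin (n+1))} (h : σ ∈ bdry n) : σ.Nonempty := by
  simp only [bdry, Finset.mem_filter] at h
  exact h.2.1

lemma clLow_subset {n : ℕ} (X : Finset (Finset (Fin (n+1)))) : clLow X ⊆ X := by
  intro τ h
  simp only [clLow, Finset.mem_filter] at h
  exact h.2.2 τ (Finset.Subset.refl _) h.2.1

lemma clLow_complex {n : ℕ} (X : Finset (Finset (Fin (n+1)))) : IsComplex (clLow X) := by
  intro σ h τ hτ hne
  simp only [clLow, Finset.mem_filter, Finset.mem_univ, true_and] at h ⊢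
  exact ⟨hne, fun ρ hρ hρn => h.2 ρ (hρ.trans hτ) hρn⟩

lemma subset_clLow {n : ℕ} {K X : Finset (Finset (Fin (n+1)))} (hb : K ⊆ bdry n)
    (hK : IsComplex K) (h : K ⊆ X) : K ⊆ clLow X := by
  intro τ hτ
  simp only [clLow, Finset.mem_filter, Finset.mem_univ, true_and]
  exact ⟨bdry_nonempty_of_mem (hb hτ), fun ρ hρ hρn => h (hK τ hτ ρ hρ hρn)⟩

lemma subset_clUp {n : ℕ} {X : Finset (Finset (Fin (n+1)))} (hb : X ⊆ bdry n) : X ⊆ clUp X := by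
  intro τ h
  simp only [clUp, Finset.mem_filter, Finset.mem_univ, true_and]
  exact ⟨bdry_nonempty_of_mem (hb h), τ, h, Finset.Subset.refl _⟩

lemma clUp_complex {n : ℕ} (X : Finset (Finset (Fin (n+1)))) : IsComplex (clUp X) := by
  intro σ h τ hτ hne
  simp only [clUp, Finset.mem_filter, Finset.mem_univ, true_and] at h ⊢
  obtain ⟨_, ρ, hρ, hs⟩ := h
  exact ⟨hne, ρ, hρ, hτ.trans hs⟩

lemma clUp_subset {n : ℕ} {K X : Finset (Finset (Fin (n+1)))}
    (hK : IsComplex K) (h : X ⊆ K) : clUp X ⊆ K := by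
  intro τ hτ
  simp only [clUp, Finset.mem_filter, Finset.mem_univ, true_and] at hτ
  obtain ⟨hne, ρ, hρ, hs⟩ := hτ
  exact hK ρ (h hρ) τ hs hne

lemma bdry_complex (n : ℕ) : IsComplex (bdry n) := by
  intro σ h τ hτ hne
  simp only [bdry, Finset.mem_filter, Finset.mem_univ, true_and] at h ⊢
  refine ⟨hne, ?_⟩
  rintro rfl
  exact h.2 (Finset.univ_subset_iff.1 hτ)

lemma lower_sum {n : ℕ} (p : Finset (Fin (n+1)) → ℝ) (K : Finset (Finset (Fin (n+1))))
    (hb : K ⊆ bdry n) (hK : IsComplex K) :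
    ∑ Y ∈ (bdry n).powerset.filter (fun Y => IsComplex Y ∧ K ⊆ Y), lowerP (bdry n) p Y
      = ∏ σ ∈ K, p σ := by
  rw [← bern_sup (bdry n) K p hb]
  rw [← Finset.sum_fiberwise_of_maps_to
    (t := (bdry n).powerset.filter (fun Y => IsComplex Y ∧ K ⊆ Y)) (g := clLow)
    (s := (bdry n).powerset.filter (fun X => K ⊆ X)) (f := bern (bdry n) p)]
  · apply Finset.sum_congr rfl
    intro Y hY
    unfold lowerP
    rw [Finset.filter_filter]
    apply Finset.sum_congr _ (fun _ _ => rfl)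
    apply Finset.filter_congr
    intro X _
    simp only [Finset.mem_filter] at hY
    constructor
    · rintro rfl
      exact ⟨hY.2.2.trans (clLow_subset X), rfl⟩
    · exact fun h => h.2
  · intro X hX
    simp only [Finset.mem_filter, Finset.mem_powerset] at hX ⊢
    exact ⟨(clLow_subset X).trans hX.1, clLow_complex X, subset_clLow hb hK hX.2⟩

lemma upper_sum {n : ℕ} (p : Finset (Fin (n+1)) → ℝ) (K : Finset (Finset (Fin (n+1))))
    (hK : IsComplex K) :
    ∑ Y ∈ (bdry n).powerset.filter (fun Y => IsComplex Y ∧ Y ⊆ K), upperP (bdry n) p Y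
      = ∏ σ ∈ bdry n \ K, (1 - p σ) := by
  rw [← bern_sub (bdry n) K p]
  rw [← Finset.sum_fiberwise_of_maps_to
    (t := (bdry n).powerset.filter (fun Y => IsComplex Y ∧ Y ⊆ K)) (g := clUp)
    (s := (bdry n).powerset.filter (fun X => X ⊆ K)) (f := bern (bdry n) p)]
  · apply Finset.sum_congr rfl
    intro Y hY
    unfold upperP
    rw [Finset.filter_filter]
    apply Finset.sum_congr _ (fun _ _ => rfl)
    apply Finset.filter_congr
    intro X hX
    simp only [Finset.mem_filter, Finset.mem_powerset] at hY hX
    constructor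
    · rintro rfl
      exact ⟨(subset_clUp hX).trans hY.2.2, rfl⟩
    · exact fun h => h.2
  · intro X hX
    simp only [Finset.mem_filter, Finset.mem_powerset] at hX ⊢
    exact ⟨clUp_subset (bdry_complex n) hX.1, clUp_complex X, clUp_subset hK hX.2⟩

/-- Intrinsic characterisation of the lower and upper measures: a probability
measure `λ` on simplicial complexes `Y ⊆ ∂Δₙ` equals `P̲ₙ` iff
`λ(Y ⊇ K) = ∏_{σ∈K} p_σ` for every complex `K`, and equals `P̄ₙ` iff
`λ(Y ⊆ K) = ∏_{σ∉K} q_σ` for every complex `K`. -/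
theorem intrinsic_characterisation (n : ℕ) (hn : 1 ≤ n)
    (p : Finset (Fin (n+1)) → ℝ) (hp : ∀ σ ∈ bdry n, 0 ≤ p σ ∧ p σ ≤ 1)
    (lam : Finset (Finset (Fin (n+1))) → ℝ)
    (hnonneg : ∀ Y ∈ (bdry n).powerset.filter (fun Y => IsComplex Y), 0 ≤ lam Y)
    (hsum : ∑ Y ∈ (bdry n).powerset.filter (fun Y => IsComplex Y), lam Y = 1) :
    ((∀ Y ∈ (bdry n).powerset.filter (fun Y => IsComplex Y),
        lam Y = lowerP (bdry n) p Y) ↔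
      (∀ K ∈ (bdry n).powerset.filter (fun K => IsComplex K),
        ∑ Y ∈ (bdry n).powerset.filter (fun Y => IsComplex Y ∧ K ⊆ Y), lam Y
          = ∏ σ ∈ K, p σ)) ∧
    ((∀ Y ∈ (bdry n).powerset.filter (fun Y => IsComplex Y),
        lam Y = upperP (bdry n) p Y) ↔
      (∀ K ∈ (bdry n).powerset.filter (fun K => IsComplex K),
        ∑ Y ∈ (bdry n).powerset.filter (fun Y => IsComplex Y ∧ Y ⊆ K), lam Y
          = ∏ σ ∈ bdry n \ K, (1 - p σ))) := by
  refine ⟨⟨fun h K hK => ?_, fun h => ?_⟩, ⟨fun h K hK => ?_, fun h => ?_⟩⟩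
  · simp only [Finset.mem_filter, Finset.mem_powerset] at hK h
    rw [← lower_sum p K hK.1 hK.2]
    apply Finset.sum_congr rfl
    intro Y hY
    simp only [Finset.mem_filter, Finset.mem_powerset] at hY
    exact h Y ⟨hY.1, hY.2.1⟩
  · apply aux_unique _ (fun K Y => K ⊆ Y) (fun Y => (bdry n).card - Y.card)
      (fun a => Finset.Subset.refl a)
    · intro K hK Y hY hKY hne
      simp only [Finset.mem_filter, Finset.mem_powerset] at hK hY
      have h1 := Finset.card_lt_card (hKY.ssubset_of_ne (Ne.symm hne))
      have h2 := Finset.card_le_card hY.1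
      show (bdry n).card - Y.card < (bdry n).card - K.card
      omega
    · intro K hK
      have h1 := h K hK
      simp only [Finset.mem_filter, Finset.mem_powerset] at hK
      rw [Finset.filter_filter, h1, lower_sum p K hK.1 hK.2]
  · simp only [Finset.mem_filter, Finset.mem_powerset] at hK h
    rw [← upper_sum p K hK.2]
    apply Finset.sum_congr rfl
    intro Y hY
    simp only [Finset.mem_filter, Finset.mem_powerset] at hY
    exact h Y ⟨hY.1, hY.2.1⟩
  · apply aux_unique _ (fun K Y => Y ⊆ K) (fun Y => Y.card)
      (fun a => Finset.Subset.refl a)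
    · intro K hK Y hY hKY hne
      exact Finset.card_lt_card (hKY.ssubset_of_ne hne)
    · intro K hK
      have h1 := h K hK
      simp only [Finset.mem_filter, Finset.mem_powerset] at hK
      rw [Finset.filter_filter, h1, upper_sum p K hK.2]
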